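/- arXiv:2405.00730 — 2 statements merged into one kernel-verified Lean document; each statement's English description precedes it below -/
import Mathlib

section
/- Let V > 0 be a positive constant potential. Then m(V) = 2√V, and the set of minimizers is M(V) = { c·u_a : c ∈ ℝ∖{0}, a ∈ ℝ } where u_a(x) = e^{−√V |x−a|}; that is, u ∈ H¹(ℝ)∖{0} satisfies I(u;V)/‖u‖_∞² = 2√V if and only if u(x) = c e^{−√V |x−a|} for some c ≠ 0 and a ∈ ℝ. -/
open MeasureTheory Filter Real Topology

/-- The supremum norm `‖u‖_∞` of a (bounded continuous) function `u : ℝ → ℝ`. -/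
noncomputable def supNorm (u : ℝ → ℝ) : ℝ := ⨆ x : ℝ, |u x|

/-- `u` is (the continuous representative of) an element of `H¹(ℝ)`:
`u` is continuous, `u ∈ L²(ℝ)`, and there is a weak derivative `u' ∈ L²(ℝ)`,
i.e. `u x = u 0 + ∫_0^x u'`. -/
def IsH1 (u : ℝ → ℝ) : Prop :=
  Continuous u ∧ MemLp u 2 (volume : Measure ℝ) ∧
    ∃ u' : ℝ → ℝ, MemLp u' 2 (volume : Measure ℝ) ∧
      ∀ x : ℝ, u x = u 0 + ∫ t in (0:ℝ)..x, u' t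

/-- The Dirichlet energy `∫_ℝ |u'(x)|² dx`.  (For `u ∈ H¹(ℝ)` the classical
derivative `deriv u` exists a.e. and coincides a.e. with the weak derivative.) -/
noncomputable def energy (u : ℝ → ℝ) : ℝ := ∫ x : ℝ, (deriv u x) ^ 2

/-- `I(u;V) = ∫_ℝ (|u'(x)|² + V(x)|u(x)|²) dx` for a potential `V : ℝ → ℝ`. -/
noncomputable def IV (V : ℝ → ℝ) (u : ℝ → ℝ) : ℝ :=
  ∫ x : ℝ, ((deriv u x) ^ 2 + V x * (u x) ^ 2)

/-- Membership in `K_a = { u ∈ H¹(ℝ) ; u(a) = ‖u‖_∞ = 1 }`. -/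
def InKa (a : ℝ) (u : ℝ → ℝ) : Prop := IsH1 u ∧ u a = 1 ∧ supNorm u = 1

/-- `F(a;V) = inf { I(u;V) ; u ∈ K_a }`. -/
noncomputable def FV (V : ℝ → ℝ) (a : ℝ) : ℝ :=
  sInf {r : ℝ | ∃ u : ℝ → ℝ, InKa a u ∧ r = IV V u}

/-- `m(V) = inf { I(u;V)/‖u‖_∞² ; u ∈ H¹(ℝ), u ≢ 0 }`. -/
noncomputable def mV (V : ℝ → ℝ) : ℝ :=
  sInf {r : ℝ | ∃ u : ℝ → ℝ, IsH1 u ∧ u ≠ 0 ∧ r = IV V u / (supNorm u) ^ 2}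

/-! Completing the square on either side of `a`, and integrating `2 u u' = (u²)'` over the two
half-lines, gives for every `u ∈ H¹(ℝ)` and every real `s`, `a`
`I(u; s²) = 2 s u(a)² + ∫_{x > a} (u' + s u)² + ∫_{x ≤ a} (u' - s u)²`.
Taking for `a` a point where `|u|` attains its maximum yields `I(u; s²) ≥ 2 s ‖u‖_∞²`. Equality
forces `u' = -s u` a.e. to the right of `a` and `u' = s u` a.e. to the left, and these linear
equations integrate to `u(x) = u(a) e^{-s |x - a|}`. -/

open Set

section IntegralPrimitive

variable {E : Type*} [NormedAddCommGroup E] [NormedSpace ℝ E] {f g : ℝ → E} {a : ℝ}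

theorem tendsto_atTop_zero_of_integral_eq_sub (hf : IntegrableAtFilter f atTop)
    (hg : IntegrableOn g (Ioi a)) (hfg : ∀ b, ∫ x in a..b, g x = f b - f a) :
    Tendsto f atTop (𝓝 0) := by
  have hlim : Tendsto f atTop (𝓝 ((∫ x in Ioi a, g x) + f a)) := by
    simpa [hfg] using (intervalIntegral_tendsto_integral_Ioi a hg tendsto_id).add_const (f a)
  have hzero : (∫ x in Ioi a, g x) + f a = 0 := by
    refine hf.eq_zero_of_tendsto (fun s hs ↦ ?_) hlim
    obtain ⟨b, hb⟩ := mem_atTop_sets.1 hs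
    exact measure_mono_top hb volume_Ici
  rwa [hzero] at hlim

theorem integral_Ioi_eq_neg_of_integral_eq_sub (hf : IntegrableAtFilter f atTop)
    (hg : IntegrableOn g (Ioi a)) (hfg : ∀ b, ∫ x in a..b, g x = f b - f a) :
    ∫ x in Ioi a, g x = -f a := by
  refine tendsto_nhds_unique (intervalIntegral_tendsto_integral_Ioi a hg tendsto_id) ?_
  simpa [hfg] using (tendsto_atTop_zero_of_integral_eq_sub hf hg hfg).sub_const (f a)

theorem tendsto_atBot_zero_of_integral_eq_sub (hf : IntegrableAtFilter f atBot)
    (hg : IntegrableOn g (Iic a)) (hfg : ∀ b, ∫ x in b..a, g x = f a - f b) :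
    Tendsto f atBot (𝓝 0) := by
  have hlim : Tendsto f atBot (𝓝 (f a - ∫ x in Iic a, g x)) := by
    simpa [hfg] using (intervalIntegral_tendsto_integral_Iic a hg tendsto_id).const_sub (f a)
  have hzero : f a - ∫ x in Iic a, g x = 0 := by
    refine hf.eq_zero_of_tendsto (fun s hs ↦ ?_) hlim
    obtain ⟨b, hb⟩ := mem_atBot_sets.1 hs
    exact measure_mono_top hb volume_Iic
  rwa [hzero] at hlim

theorem integral_Iic_eq_of_integral_eq_sub (hf : IntegrableAtFilter f atBot)
    (hg : IntegrableOn g (Iic a)) (hfg : ∀ b, ∫ x in b..a, g x = f a - f b) :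
    ∫ x in Iic a, g x = f a := by
  refine tendsto_nhds_unique (intervalIntegral_tendsto_integral_Iic a hg tendsto_id) ?_
  simpa [hfg] using (tendsto_atBot_zero_of_integral_eq_sub hf hg hfg).const_sub (f a)

end IntegralPrimitive

theorem ae_eq_zero_of_setIntegral_sq_nonpos {α : Type*} [MeasurableSpace α] {μ : Measure α}
    {S : Set α} {f : α → ℝ} (hS : MeasurableSet S) (hf : MemLp f 2 (μ.restrict S))
    (h : ∫ x in S, f x ^ 2 ∂μ ≤ 0) : ∀ᵐ x ∂μ, x ∈ S → f x = 0 := by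
  have hzero : ∫ x in S, f x ^ 2 ∂μ = 0 := h.antisymm (integral_nonneg fun x ↦ sq_nonneg (f x))
  rw [integral_eq_zero_iff_of_nonneg (fun x ↦ sq_nonneg (f x)) hf.integrable_sq] at hzero
  filter_upwards [(ae_restrict_iff' hS).1 hzero] with x hx hxS
  exact sq_eq_zero_iff.1 (hx hxS)

theorem exists_forall_norm_le_of_tendsto_cocompact {X E : Type*} [TopologicalSpace X] [Nonempty X]
    [NormedAddCommGroup E] {f : X → E} (hf : Continuous f)
    (hlim : Tendsto f (cocompact X) (𝓝 0)) : ∃ a, ∀ x, ‖f x‖ ≤ ‖f a‖ := by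
  by_cases! hzero : ∀ x, f x = 0
  · exact ⟨Classical.arbitrary X, fun x ↦ by simp [hzero]⟩
  · obtain ⟨x₀, hx₀⟩ := hzero
    exact hf.norm.exists_forall_ge' x₀ <|
      (tendsto_zero_iff_norm_tendsto_zero.1 hlim).eventually_le_const (norm_pos_iff.2 hx₀)

theorem intervalIntegrable_of_locallyIntegrable {E : Type*} [NormedAddCommGroup E] {g : ℝ → E}
    (hg : LocallyIntegrable g) (a b : ℝ) : IntervalIntegrable g volume a b :=
  (hg.integrableOn_isCompact isCompact_uIcc).intervalIntegrable

theorem ae_hasDerivAt_of_eq_add_integral {E : Type*} [NormedAddCommGroup E] [NormedSpace ℝ E]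
    [CompleteSpace E] {f g : ℝ → E} {c : ℝ} (hg : LocallyIntegrable g)
    (hf : ∀ x, f x = f c + ∫ t in c..x, g t) : ∀ᵐ x, HasDerivAt f (g x) x := by
  filter_upwards [_root_.LocallyIntegrable.ae_hasDerivAt_integral hg] with x hx
  rw [funext hf]
  exact (hx c).const_add (f c)

theorem absolutelyContinuousOnInterval_of_eq_add_integral {f g : ℝ → ℝ} {c : ℝ}
    (hg : LocallyIntegrable g) (hf : ∀ x, f x = f c + ∫ t in c..x, g t) (a b : ℝ) :
    AbsolutelyContinuousOnInterval f a b := by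
  have hint := intervalIntegrable_of_locallyIntegrable hg
  have hbase : f = (fun _ ↦ f a) + fun x ↦ ∫ t in a..x, g t := by
    funext x
    simp only [Pi.add_apply]
    rw [hf x, hf a, ← intervalIntegral.integral_add_adjacent_intervals (hint c a) (hint a x),
      add_assoc]
  have hconst : AbsolutelyContinuousOnInterval (fun _ : ℝ ↦ f a) a b :=
    contDiffOn_const.absolutelyContinuousOnInterval
  rw [hbase]
  exact hconst.add ((hint a b).absolutelyContinuousOnInterval_intervalIntegral left_mem_uIcc)

theorem eq_mul_exp_of_ae_deriv_eq {u : ℝ → ℝ} {k a b : ℝ}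
    (hu : AbsolutelyContinuousOnInterval u a b)
    (hderiv : ∀ᵐ x, x ∈ uIoc a b → deriv u x = k * u x) : u b = u a * exp (k * (b - a)) := by
  have hexp : AbsolutelyContinuousOnInterval (fun x ↦ exp (-k * x)) a b :=
    ContDiffOn.absolutelyContinuousOnInterval (by fun_prop)
  have hzero : ∀ᵐ x, x ∈ uIcc a b → HasDerivAt ((fun x ↦ exp (-k * x)) * u) 0 x := by
    filter_upwards [hderiv, hu.ae_differentiableAt, Measure.ae_ne volume (min a b)]
      with x hx hdiff hne hmem
    have hux : deriv u x = k * u x := hx ⟨lt_of_le_of_ne hmem.1 hne.symm, hmem.2⟩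
    refine ((((hasDerivAt_id x).const_mul (-k)).exp).mul (hdiff hmem).hasDerivAt).congr_deriv ?_
    rw [hux, id]
    ring
  obtain ⟨C, hC⟩ := (hexp.mul hu).const_of_ae_hasDerivAt_zero hzero
  have hab : exp (-k * b) * u b = exp (-k * a) * u a :=
    (hC b right_mem_uIcc).trans (hC a left_mem_uIcc).symm
  calc u b = exp (k * b) * (exp (-k * b) * u b) := by
        rw [← mul_assoc, ← exp_add]; simp
    _ = u a * (exp (k * b) * exp (-k * a)) := by rw [hab]; ring
    _ = u a * exp (k * (b - a)) := by rw [← exp_add]; ring_nf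

theorem supNorm_eq_abs_of_forall_le {u : ℝ → ℝ} {a : ℝ} (h : ∀ x, |u x| ≤ |u a|) :
    supNorm u = |u a| :=
  le_antisymm (ciSup_le h) (le_ciSup (f := fun x ↦ |u x|) ⟨|u a|, forall_mem_range.2 h⟩ a)

theorem isH1_of_differentiableAt_off_countable {u : ℝ → ℝ} {S : Set ℝ} (hS : S.Countable)
    (hcont : Continuous u) (hdiff : ∀ x ∉ S, DifferentiableAt ℝ u x)
    (hu : MemLp u 2) (hu' : MemLp (deriv u) 2) : IsH1 u := by
  have hloc : LocallyIntegrable (deriv u) := hu'.locallyIntegrable one_le_two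
  refine ⟨hcont, hu, deriv u, hu', fun x ↦ ?_⟩
  rw [integral_eq_of_hasDerivAt_off_countable u (deriv u) hS hcont.continuousOn
    (fun y hy ↦ (hdiff y hy.2).hasDerivAt) (intervalIntegrable_of_locallyIntegrable hloc 0 x)]
  ring

namespace IsH1

variable {u : ℝ → ℝ}

theorem memLp (hu : IsH1 u) : MemLp u 2 := hu.2.1

theorem memLp_deriv (hu : IsH1 u) : MemLp (deriv u) 2 := by
  obtain ⟨-, -, u', hu', hint⟩ := hu
  refine hu'.ae_eq ?_
  filter_upwards [ae_hasDerivAt_of_eq_add_integral (hu'.locallyIntegrable one_le_two) hint]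
    with x hx using hx.deriv.symm

theorem absolutelyContinuousOnInterval (hu : IsH1 u) (a b : ℝ) :
    AbsolutelyContinuousOnInterval u a b := by
  obtain ⟨-, -, u', hu', hint⟩ := hu
  exact absolutelyContinuousOnInterval_of_eq_add_integral (hu'.locallyIntegrable one_le_two)
    hint a b

theorem integrable_deriv_mul_self (hu : IsH1 u) : Integrable fun x ↦ 2 * (deriv u x * u x) :=
  (hu.memLp_deriv.integrable_mul hu.memLp).const_mul 2

theorem integral_deriv_mul_self (hu : IsH1 u) (a b : ℝ) :
    ∫ x in a..b, 2 * (deriv u x * u x) = u b ^ 2 - u a ^ 2 := by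
  have hac := hu.absolutelyContinuousOnInterval a b
  rw [sq, sq, ← hac.integral_deriv_mul_eq_sub hac]
  congr 1 with x
  ring

theorem integral_Ioi_deriv_mul_self (hu : IsH1 u) (a : ℝ) :
    ∫ x in Ioi a, 2 * (deriv u x * u x) = -u a ^ 2 :=
  integral_Ioi_eq_neg_of_integral_eq_sub (f := fun x ↦ u x ^ 2)
    (hu.memLp.integrable_sq.integrableAtFilter _) hu.integrable_deriv_mul_self.integrableOn
    (hu.integral_deriv_mul_self a)

theorem integral_Iic_deriv_mul_self (hu : IsH1 u) (a : ℝ) :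
    ∫ x in Iic a, 2 * (deriv u x * u x) = u a ^ 2 :=
  integral_Iic_eq_of_integral_eq_sub (f := fun x ↦ u x ^ 2)
    (hu.memLp.integrable_sq.integrableAtFilter _) hu.integrable_deriv_mul_self.integrableOn
    (hu.integral_deriv_mul_self · a)

theorem tendsto_cocompact (hu : IsH1 u) : Tendsto u (cocompact ℝ) (𝓝 0) := by
  have hsq : Tendsto (fun x ↦ u x ^ 2) (cocompact ℝ) (𝓝 0) := by
    have hint (l : Filter ℝ) : IntegrableAtFilter (fun x ↦ u x ^ 2) l :=
      hu.memLp.integrable_sq.integrableAtFilter l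
    rw [cocompact_eq_atBot_atTop]
    exact (tendsto_atBot_zero_of_integral_eq_sub (hint _)
      hu.integrable_deriv_mul_self.integrableOn (hu.integral_deriv_mul_self · 0)).sup
      (tendsto_atTop_zero_of_integral_eq_sub (hint _)
        hu.integrable_deriv_mul_self.integrableOn (hu.integral_deriv_mul_self 0))
  refine (tendsto_zero_iff_abs_tendsto_zero u).2 ?_
  simpa only [sqrt_sq_eq_abs, sqrt_zero, Function.comp_def] using hsq.sqrt

theorem exists_ne_zero_supNorm_eq_abs (hu : IsH1 u) (hne : u ≠ 0) :
    ∃ a, u a ≠ 0 ∧ supNorm u = |u a| := by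
  obtain ⟨a, ha⟩ := exists_forall_norm_le_of_tendsto_cocompact hu.1 hu.tendsto_cocompact
  refine ⟨a, fun hzero ↦ hne (funext fun x ↦ ?_), supNorm_eq_abs_of_forall_le ha⟩
  simpa [hzero] using ha x

theorem integrable_deriv_sq_add (hu : IsH1 u) (s : ℝ) :
    Integrable fun x ↦ deriv u x ^ 2 + s ^ 2 * u x ^ 2 :=
  hu.memLp_deriv.integrable_sq.add (hu.memLp.integrable_sq.const_mul (s ^ 2))

theorem setIntegral_deriv_add_sq (hu : IsH1 u) (s : ℝ) (S : Set ℝ) :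
    ∫ x in S, (deriv u x + s * u x) ^ 2 =
      (∫ x in S, (deriv u x ^ 2 + s ^ 2 * u x ^ 2)) + s * ∫ x in S, 2 * (deriv u x * u x) := by
  rw [← integral_const_mul, ← integral_add (hu.integrable_deriv_sq_add s).integrableOn
    (hu.integrable_deriv_mul_self.const_mul s).integrableOn]
  congr 1 with x
  ring

theorem IV_const_sq_eq (hu : IsH1 u) (s a : ℝ) :
    IV (fun _ ↦ s ^ 2) u = 2 * s * u a ^ 2 + (∫ x in Ioi a, (deriv u x + s * u x) ^ 2)
      + ∫ x in Iic a, (deriv u x - s * u x) ^ 2 := by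
  have hright : ∫ x in Ioi a, (deriv u x + s * u x) ^ 2 =
      (∫ x in Ioi a, (deriv u x ^ 2 + s ^ 2 * u x ^ 2)) - s * u a ^ 2 := by
    rw [hu.setIntegral_deriv_add_sq, hu.integral_Ioi_deriv_mul_self]
    ring
  have hleft : ∫ x in Iic a, (deriv u x - s * u x) ^ 2 =
      (∫ x in Iic a, (deriv u x ^ 2 + s ^ 2 * u x ^ 2)) - s * u a ^ 2 := by
    have h := hu.setIntegral_deriv_add_sq (-s) (Iic a)
    rw [hu.integral_Iic_deriv_mul_self] at h
    simpa only [neg_mul, neg_sq, ← sub_eq_add_neg] using h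
  have hsplit := intervalIntegral.integral_Iic_add_Ioi (b := a)
    (hu.integrable_deriv_sq_add s).integrableOn (hu.integrable_deriv_sq_add s).integrableOn
  rw [hright, hleft, IV, ← hsplit]
  ring

theorem two_mul_sq_le_IV (hu : IsH1 u) (s a : ℝ) : 2 * s * u a ^ 2 ≤ IV (fun _ ↦ s ^ 2) u := by
  rw [hu.IV_const_sq_eq s a, add_assoc]
  exact le_add_of_nonneg_right (by positivity)

end IsH1

section Peakon

/-- The peakon `x ↦ c e^{-s |x - a|}` of rate `s`, height `c` and peak position `a`: the family of
minimizers for the potential `s²`. The function `u_a` of the statement is `peakon √V 1 a`. -/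
noncomputable def peakon (s c a : ℝ) : ℝ → ℝ := fun x ↦ c * exp (-s * |x - a|)

theorem IsH1.eq_peakon_of_IV_eq {u : ℝ → ℝ} (hu : IsH1 u) {s a : ℝ}
    (h : IV (fun _ ↦ s ^ 2) u = 2 * s * u a ^ 2) : u = peakon s (u a) a := by
  have hright_nonneg : 0 ≤ ∫ x in Ioi a, (deriv u x + s * u x) ^ 2 :=
    integral_nonneg fun _ ↦ sq_nonneg _
  have hleft_nonneg : 0 ≤ ∫ x in Iic a, (deriv u x - s * u x) ^ 2 :=
    integral_nonneg fun _ ↦ sq_nonneg _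
  have hsum := hu.IV_const_sq_eq s a
  have hright_memLp : MemLp (fun x ↦ deriv u x + s * u x) 2 :=
    hu.memLp_deriv.add (hu.memLp.const_mul s)
  have hleft_memLp : MemLp (fun x ↦ deriv u x - s * u x) 2 :=
    hu.memLp_deriv.sub (hu.memLp.const_mul s)
  have hright : ∀ᵐ x, x ∈ Ioi a → deriv u x + s * u x = 0 :=
    ae_eq_zero_of_setIntegral_sq_nonpos measurableSet_Ioi (hright_memLp.restrict _) (by linarith)
  have hleft : ∀ᵐ x, x ∈ Iic a → deriv u x - s * u x = 0 :=
    ae_eq_zero_of_setIntegral_sq_nonpos measurableSet_Iic (hleft_memLp.restrict _) (by linarith)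
  funext x
  have hac := hu.absolutelyContinuousOnInterval a x
  rcases le_total a x with hax | hxa
  · rw [peakon, abs_of_nonneg (sub_nonneg.2 hax)]
    refine eq_mul_exp_of_ae_deriv_eq hac ?_
    filter_upwards [hright] with y hy hmem
    rw [uIoc_of_le hax] at hmem
    linarith [hy hmem.1]
  · rw [peakon, abs_of_nonpos (sub_nonpos.2 hxa), neg_mul_neg]
    refine eq_mul_exp_of_ae_deriv_eq hac ?_
    filter_upwards [hleft] with y hy hmem
    rw [uIoc_of_ge hxa] at hmem
    linarith [hy hmem.2]

variable {s c a x : ℝ}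

theorem continuous_peakon : Continuous (peakon s c a) := by
  unfold peakon
  fun_prop

theorem hasDerivAt_peakon_of_lt (hx : a < x) :
    HasDerivAt (peakon s c a) (-s * peakon s c a x) x := by
  have habs : HasDerivAt (fun y ↦ |y - a|) 1 x :=
    (hasDerivAt_abs_pos (sub_pos.2 hx)).comp_sub_const x a
  refine ((habs.const_mul (-s)).exp.const_mul c).congr_deriv ?_
  rw [peakon]
  ring

theorem hasDerivAt_peakon_of_gt (hx : x < a) :
    HasDerivAt (peakon s c a) (s * peakon s c a x) x := by
  have habs : HasDerivAt (fun y ↦ |y - a|) (-1) x :=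
    (hasDerivAt_abs_neg (sub_neg.2 hx)).comp_sub_const x a
  refine ((habs.const_mul (-s)).exp.const_mul c).congr_deriv ?_
  rw [peakon]
  ring

theorem differentiableAt_peakon (hx : x ≠ a) : DifferentiableAt ℝ (peakon s c a) x :=
  hx.lt_or_gt.elim (fun h ↦ (hasDerivAt_peakon_of_gt h).differentiableAt)
    (fun h ↦ (hasDerivAt_peakon_of_lt h).differentiableAt)

theorem abs_deriv_peakon (hx : x ≠ a) : |deriv (peakon s c a) x| = |s * peakon s c a x| := by
  rcases hx.lt_or_gt with h | h
  · rw [(hasDerivAt_peakon_of_gt h).deriv]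
  · rw [(hasDerivAt_peakon_of_lt h).deriv, neg_mul, abs_neg]

theorem integrable_exp_neg_mul_abs (hs : 0 < s) : Integrable fun x : ℝ ↦ exp (-s * |x|) := by
  refine Integrable.of_integral_ne_zero ?_
  rw [integral_comp_abs (f := fun t ↦ exp (-s * t)), integral_exp_mul_Ioi (neg_lt_zero.2 hs)]
  simp [hs.ne']

theorem memLp_peakon (hs : 0 < s) : MemLp (peakon s c a) 2 := by
  rw [memLp_two_iff_integrable_sq continuous_peakon.aestronglyMeasurable]
  have hint : Integrable fun x : ℝ ↦ c ^ 2 * exp (-(2 * s) * |x - a|) :=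
    ((integrable_exp_neg_mul_abs (mul_pos two_pos hs)).comp_sub_right a).const_mul (c ^ 2)
  refine hint.congr (Eventually.of_forall fun x ↦ ?_)
  simp only [peakon, mul_pow, ← exp_nat_mul]
  ring_nf

theorem isH1_peakon (hs : 0 < s) : IsH1 (peakon s c a) := by
  have hderiv : MemLp (deriv (peakon s c a)) 2 := by
    refine ((memLp_peakon (c := c) (a := a) hs).const_mul s).of_le
      (measurable_deriv _).aestronglyMeasurable ?_
    filter_upwards [Measure.ae_ne volume a] with x hx using (abs_deriv_peakon hx).le
  exact isH1_of_differentiableAt_off_countable (countable_singleton a) continuous_peakon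
    (fun _ ↦ differentiableAt_peakon) (memLp_peakon hs) hderiv

theorem peakon_self : peakon s c a a = c := by simp [peakon]

theorem peakon_ne_zero (hc : c ≠ 0) : peakon s c a ≠ 0 := fun h ↦
  hc (by simpa [peakon_self] using congrFun h a)

theorem IV_peakon (hs : 0 < s) : IV (fun _ ↦ s ^ 2) (peakon s c a) = 2 * s * c ^ 2 := by
  have hright : ∫ x in Ioi a, (deriv (peakon s c a) x + s * peakon s c a x) ^ 2 = 0 :=
    setIntegral_eq_zero_of_forall_eq_zero fun x hx ↦ by
      rw [(hasDerivAt_peakon_of_lt hx).deriv]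
      ring
  have hleft : ∫ x in Iic a, (deriv (peakon s c a) x - s * peakon s c a x) ^ 2 = 0 := by
    rw [integral_Iic_eq_integral_Iio]
    exact setIntegral_eq_zero_of_forall_eq_zero fun x hx ↦ by
      rw [(hasDerivAt_peakon_of_gt hx).deriv]
      ring
  rw [(isH1_peakon hs).IV_const_sq_eq s a, hright, hleft, peakon_self, add_zero, add_zero]

theorem supNorm_peakon (hs : 0 ≤ s) : supNorm (peakon s c a) = |c| := by
  rw [supNorm_eq_abs_of_forall_le (a := a) fun x ↦ ?_, peakon_self]
  rw [peakon_self, peakon, abs_mul, abs_exp]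
  refine mul_le_of_le_one_right (abs_nonneg c) (exp_le_one_iff.2 ?_)
  exact mul_nonpos_of_nonpos_of_nonneg (neg_nonpos.2 hs) (abs_nonneg _)

theorem IV_div_supNorm_sq_peakon (hs : 0 < s) (hc : c ≠ 0) :
    IV (fun _ ↦ s ^ 2) (peakon s c a) / supNorm (peakon s c a) ^ 2 = 2 * s := by
  rw [IV_peakon hs, supNorm_peakon hs.le, sq_abs, mul_div_cancel_right₀ _ (pow_ne_zero 2 hc)]

end Peakon

theorem IsH1.two_mul_le_IV_div_supNorm_sq {u : ℝ → ℝ} (hu : IsH1 u) (hne : u ≠ 0) (s : ℝ) :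
    2 * s ≤ IV (fun _ ↦ s ^ 2) u / supNorm u ^ 2 := by
  obtain ⟨a, ha, hsup⟩ := hu.exists_ne_zero_supNorm_eq_abs hne
  rw [hsup, sq_abs, le_div_iff₀ (by positivity)]
  exact hu.two_mul_sq_le_IV s a

theorem IsH1.IV_div_supNorm_sq_eq_iff {u : ℝ → ℝ} (hu : IsH1 u) (hne : u ≠ 0) {s : ℝ}
    (hs : 0 < s) :
    IV (fun _ ↦ s ^ 2) u / supNorm u ^ 2 = 2 * s ↔ ∃ c a, c ≠ 0 ∧ u = peakon s c a := by
  constructor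
  · intro h
    obtain ⟨a, ha, hsup⟩ := hu.exists_ne_zero_supNorm_eq_abs hne
    rw [hsup, sq_abs, div_eq_iff (pow_ne_zero 2 ha)] at h
    exact ⟨u a, a, ha, hu.eq_peakon_of_IV_eq h⟩
  · rintro ⟨c, a, hc, rfl⟩
    exact IV_div_supNorm_sq_peakon hs hc

theorem mV_const_sq {s : ℝ} (hs : 0 < s) : mV (fun _ ↦ s ^ 2) = 2 * s := by
  refine IsLeast.csInf_eq ⟨⟨peakon s 1 0, isH1_peakon hs, peakon_ne_zero one_ne_zero,
    (IV_div_supNorm_sq_peakon hs one_ne_zero).symm⟩, ?_⟩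
  rintro _ ⟨u, hu, hne, rfl⟩
  exact hu.two_mul_le_IV_div_supNorm_sq hne s

/-- **Constant potentials.** For a constant potential `V ≡ v > 0`, we have `m(V) = 2√v`,
and `u ∈ H¹(ℝ)∖{0}` is a minimizer (`I(u;V)/‖u‖_∞² = m(V) = 2√v`) if and only if
`u(x) = c e^{-√v |x-a|}` for some `c ≠ 0` and `a ∈ ℝ`. -/
theorem mV_const_and_minimizers (v : ℝ) (hv : 0 < v) :
    mV (fun _ : ℝ => v) = 2 * Real.sqrt v ∧
      ∀ u : ℝ → ℝ, IsH1 u → u ≠ 0 →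
        (IV (fun _ : ℝ => v) u / (supNorm u) ^ 2 = 2 * Real.sqrt v ↔
          ∃ c a : ℝ, c ≠ 0 ∧ u = fun x : ℝ => c * Real.exp (-(Real.sqrt v) * |x - a|)) := by
  have hs : 0 < √v := sqrt_pos.2 hv
  have hV : (fun _ : ℝ ↦ v) = fun _ ↦ √v ^ 2 := by rw [sq_sqrt hv.le]
  rw [hV]
  exact ⟨mV_const_sq hs, fun u hu hne ↦ hu.IV_div_supNorm_sq_eq_iff hne hs⟩
end

section
/- Let V₁, V₂ be bounded symmetric bilinear forms on H¹(ℝ), and suppose m(V₁) ≠ −∞ or m(V₂) ≠ −∞. Then inf_{u∈H¹(ℝ), u≠0} (V₁−V₂)(u,u)/‖u‖_∞² ≤ m(V₁) − m(V₂) ≤ sup_{u∈H¹(ℝ), u≠0} (V₁−V₂)(u,u)/‖u‖_∞² (comparison principle for m). -/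
open MeasureTheory Filter Real Topology

/-- The `H¹(ℝ)` norm `(∫ |u|² + ∫ |u'|²)^{1/2}`. -/
noncomputable def h1Norm (u : ℝ → ℝ) : ℝ :=
  Real.sqrt ((∫ x : ℝ, (u x) ^ 2) + energy u)

/-- A bounded symmetric bilinear form on `H¹(ℝ)`. -/
structure BddSymmBilinearForm where
  B : (ℝ → ℝ) → (ℝ → ℝ) → ℝ
  symm : ∀ u v, IsH1 u → IsH1 v → B u v = B v u
  add_left : ∀ u v w, IsH1 u → IsH1 v → IsH1 w → B (u + v) w = B u w + B v w
  smul_left : ∀ (c : ℝ) (u v : ℝ → ℝ), IsH1 u → IsH1 v → B (c • u) v = c * B u v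
  bounded : ∃ C : ℝ, ∀ u v, IsH1 u → IsH1 v → |B u v| ≤ C * h1Norm u * h1Norm v

/-- `I(u;V) = ∫_ℝ |u'(x)|² dx + V(u,u)` for a bounded symmetric bilinear form `V`. -/
noncomputable def IB (V : BddSymmBilinearForm) (u : ℝ → ℝ) : ℝ := energy u + V.B u u

/-- `m(V) = inf { I(u;V)/‖u‖_∞² ; u ∈ H¹(ℝ), u ≢ 0 }`, as a value in `[-∞,∞)` (extended reals). -/
noncomputable def mB (V : BddSymmBilinearForm) : EReal :=
  sInf {r : EReal | ∃ u : ℝ → ℝ, IsH1 u ∧ u ≠ 0 ∧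
    r = ((IB V u / (supNorm u) ^ 2 : ℝ) : EReal)}

/-- `F(a;V) = inf { I(u;V) ; u ∈ K_a }`, as a value in `[-∞,∞)` (extended reals). -/
noncomputable def FB (V : BddSymmBilinearForm) (a : ℝ) : EReal :=
  sInf {r : EReal | ∃ u : ℝ → ℝ, InKa a u ∧ r = ((IB V u : ℝ) : EReal)}

theorem ereal_sub_sub_self_le (a b : EReal) : a - (a - b) ≤ b := by
  induction b with
  | bot => cases a <;> simp
  | coe b => exact EReal.sub_le_of_le_add' EReal.sub_add_cancel.ge
  | top => exact le_top

theorem ereal_iInf_sub_le_iInf_sub_iInf {ι : Sort*} (f g : ι → EReal)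
    (h_bot : (⨅ i, f i) ≠ ⊥ ∨ (⨅ i, g i) ≠ ⊥)
    (h_top : (⨅ i, f i) ≠ ⊤ ∨ (⨅ i, g i) ≠ ⊤) :
    ⨅ i, (f i - g i) ≤ (⨅ i, f i) - ⨅ i, g i := by
  refine (EReal.le_sub_iff_add_le h_bot.symm h_top.symm).2 (le_iInf fun i ↦ ?_)
  calc (⨅ i, (f i - g i)) + ⨅ i, g i
      ≤ (f i - g i) + g i := add_le_add (iInf_le _ i) (iInf_le _ i)
    _ ≤ f i := EReal.add_le_of_le_sub le_rfl

theorem ereal_iInf_sub_iInf_le_iSup_sub {ι : Sort*} (f g : ι → EReal) :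
    (⨅ i, f i) - ⨅ i, g i ≤ ⨆ i, (f i - g i) := by
  obtain hS | hS := eq_or_ne (⨆ i, (f i - g i)) ⊤
  · exact hS ▸ le_top
  obtain hg | hg := eq_or_ne (⨅ i, g i) ⊤
  · simp only [hg, EReal.sub_top, bot_le]
  have h_sub : (⨅ i, f i) - ⨆ i, (f i - g i) ≤ ⨅ i, g i := le_iInf fun i ↦
    calc (⨅ i, f i) - ⨆ i, (f i - g i)
        ≤ f i - (f i - g i) :=
          EReal.sub_le_sub (iInf_le _ i) (le_iSup (fun i ↦ f i - g i) i)
      _ ≤ g i := ereal_sub_sub_self_le _ _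
  exact EReal.sub_le_of_le_add' ((EReal.sub_le_iff_le_add (.inr hg) (.inl hS)).1 h_sub)

theorem isH1_of_contDiff_of_hasCompactSupport {u : ℝ → ℝ} (hu : ContDiff ℝ 1 u)
    (hs : HasCompactSupport u) : IsH1 u := by
  have hu' : Continuous (deriv u) := hu.continuous_deriv le_rfl
  refine ⟨hu.continuous, hu.continuous.memLp_of_hasCompactSupport hs,
    deriv u, hu'.memLp_of_hasCompactSupport hs.deriv, fun x ↦ ?_⟩
  rw [intervalIntegral.integral_deriv_eq_sub
    (fun y _ ↦ hu.differentiable one_ne_zero y) (hu'.intervalIntegrable _ _), add_sub_cancel]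

theorem exists_isH1_ne_zero : ∃ u : ℝ → ℝ, IsH1 u ∧ u ≠ 0 := by
  let φ : ContDiffBump (0 : ℝ) := default
  refine ⟨φ, isH1_of_contDiff_of_hasCompactSupport φ.contDiff φ.hasCompactSupport, fun h ↦ ?_⟩
  exact (φ.pos_of_mem_ball (Metric.mem_ball_self φ.rOut_pos)).ne' (congrFun h 0)

/-- The set of quotients `J(u)/‖u‖_∞²` over nonzero `u ∈ H¹(ℝ)`, for an arbitrary functional `J`;
`m(V)` is the infimum of this set for `J = I(·;V)`. -/
def supNormQuotients (J : (ℝ → ℝ) → ℝ) : Set EReal :=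
  {r : EReal | ∃ u : ℝ → ℝ, IsH1 u ∧ u ≠ 0 ∧ r = ((J u / (supNorm u) ^ 2 : ℝ) : EReal)}

theorem supNormQuotients_eq_range (J : (ℝ → ℝ) → ℝ) :
    supNormQuotients J = Set.range fun u : {u : ℝ → ℝ // IsH1 u ∧ u ≠ 0} ↦
      ((J u / (supNorm u) ^ 2 : ℝ) : EReal) := by
  ext r
  simp only [supNormQuotients, Set.mem_ofPred_eq, Set.mem_range, Subtype.exists, exists_prop,
    and_assoc, eq_comm]

theorem sInf_supNormQuotients_ne_top (J : (ℝ → ℝ) → ℝ) : sInf (supNormQuotients J) ≠ ⊤ := by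
  obtain ⟨u, hu, hu0⟩ := exists_isH1_ne_zero
  exact ne_top_of_le_ne_top (EReal.coe_ne_top _) (sInf_le ⟨u, hu, hu0, rfl⟩)

theorem comparison_principle_general (J₁ J₂ : (ℝ → ℝ) → ℝ)
    (h : sInf (supNormQuotients J₁) ≠ ⊥ ∨ sInf (supNormQuotients J₂) ≠ ⊥) :
    sInf (supNormQuotients (J₁ - J₂)) ≤
        sInf (supNormQuotients J₁) - sInf (supNormQuotients J₂) ∧
      sInf (supNormQuotients J₁) - sInf (supNormQuotients J₂) ≤
        sSup (supNormQuotients (J₁ - J₂)) := by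
  have h_top := sInf_supNormQuotients_ne_top J₁
  simp only [supNormQuotients_eq_range, sInf_range, sSup_range, Pi.sub_apply, sub_div,
    EReal.coe_sub] at h h_top ⊢
  exact ⟨ereal_iInf_sub_le_iInf_sub_iInf _ _ h (.inl h_top), ereal_iInf_sub_iInf_le_iSup_sub _ _⟩

/-- **Comparison principle for `m`.** For bounded symmetric bilinear forms `V₁, V₂` on
`H¹(ℝ)` with `m(V₁) ≠ -∞` or `m(V₂) ≠ -∞`:
`inf_u (V₁-V₂)(u,u)/‖u‖_∞² ≤ m(V₁) - m(V₂) ≤ sup_u (V₁-V₂)(u,u)/‖u‖_∞²`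
(in the extended reals). -/
theorem comparison_principle (V₁ V₂ : BddSymmBilinearForm)
    (h : mB V₁ ≠ ⊥ ∨ mB V₂ ≠ ⊥) :
    sInf {r : EReal | ∃ u : ℝ → ℝ, IsH1 u ∧ u ≠ 0 ∧
        r = (((V₁.B u u - V₂.B u u) / (supNorm u) ^ 2 : ℝ) : EReal)}
      ≤ mB V₁ - mB V₂ ∧
    mB V₁ - mB V₂ ≤
      sSup {r : EReal | ∃ u : ℝ → ℝ, IsH1 u ∧ u ≠ 0 ∧
        r = (((V₁.B u u - V₂.B u u) / (supNorm u) ^ 2 : ℝ) : EReal)} := by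
  simpa only [mB, IB, supNormQuotients, Pi.sub_apply, add_sub_add_left_eq_sub] using
    comparison_principle_general (IB V₁) (IB V₂) h
end
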